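/- Let A be an n×n real positive-semidefinite matrix, let 1 ≤ r < k ≤ n, and let Ω be an n×k random matrix with independent standard normal entries. Define the Nyström approximation Â = AΩ((Ω*AΩ)†)Ω*A and let Â_r = ⟦Â⟧_r. Then E‖A − Â_r‖_∞ ≤ ‖A − ⟦A⟧_r‖_∞ + 2·min over natural numbers ϱ with ϱ < k − 1 of [(1 + ϱ/(k − ϱ − 1)) · ‖A − ⟦A⟧_ϱ‖₁]. -/

import Mathlib

open Matrix MeasureTheory ProbabilityTheory
open scoped ENNReal NNReal ComplexOrder Classical

namespace PsdSketch

variable {𝕜 : Type*} [RCLike 𝕜]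

/-- The four Penrose conditions characterizing the Moore–Penrose pseudoinverse. -/
def IsMoorePenrose {m k : ℕ} (M : Matrix (Fin m) (Fin k) 𝕜)
    (X : Matrix (Fin k) (Fin m) 𝕜) : Prop :=
  M * X * M = M ∧ X * M * X = X ∧ (M * X)ᴴ = M * X ∧ (X * M)ᴴ = X * M

/-- The Moore–Penrose pseudoinverse `M†` (the unique matrix satisfying the
Penrose conditions). -/
noncomputable def pinv {m k : ℕ} (M : Matrix (Fin m) (Fin k) 𝕜) :
    Matrix (Fin k) (Fin m) 𝕜 :=
  if h : ∃ X, IsMoorePenrose M X then h.choose else 0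

/-- The Nyström approximation `Â = A Ω ((Ω* A Ω)†) Ω* A`. -/
noncomputable def nystrom {n k : ℕ} (A : Matrix (Fin n) (Fin n) 𝕜)
    (Ω : Matrix (Fin n) (Fin k) 𝕜) : Matrix (Fin n) (Fin n) 𝕜 :=
  A * Ω * pinv (Ωᴴ * A * Ω) * Ωᴴ * A

/-- The `i`-th singular value of a square matrix, 0-indexed and listed in weakly
decreasing order (so `sval M 0 = σ₁(M)`), with `sval M i = 0` for `i ≥ n`. -/
noncomputable def sval {n : ℕ} (M : Matrix (Fin n) (Fin n) 𝕜) (i : ℕ) : ℝ :=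
  if h : i < n then
    Real.sqrt
      ((Matrix.posSemidef_conjTranspose_mul_self M).1.eigenvalues
        (Tuple.sort (Matrix.posSemidef_conjTranspose_mul_self M).1.eigenvalues
          (Fin.rev ⟨i, h⟩)))
  else 0

/-- The Schatten `p`-norm: the `ℓ_p` norm of the vector of singular values. -/
noncomputable def schatten {n : ℕ} (p : ℝ≥0∞) (M : Matrix (Fin n) (Fin n) 𝕜) : ℝ :=
  if p = ∞ then sval M 0
  else (∑ i ∈ Finset.range n, sval M i ^ p.toReal) ^ (1 / p.toReal)

/-- `σ_{r+1}^{(p)}(M)`, the optimal rank-`r` approximation error of `M` in the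
Schatten `p`-norm: `(Σ_{i > r} σ_i(M)^p)^{1/p}` (for `p = ∞`, `σ_{r+1}(M)`). -/
noncomputable def tailNorm {n : ℕ} (p : ℝ≥0∞) (M : Matrix (Fin n) (Fin n) 𝕜)
    (r : ℕ) : ℝ :=
  if p = ∞ then sval M r
  else (∑ i ∈ Finset.Ico r n, sval M i ^ p.toReal) ^ (1 / p.toReal)

/-- `B` is a (simultaneous) best rank-`r` approximation of `M` with respect to every
Schatten `p`-norm; this is the defining property of an `r`-truncated SVD `⟦M⟧_r`. -/
def IsBestRankApprox {n : ℕ} (M B : Matrix (Fin n) (Fin n) 𝕜) (r : ℕ) : Prop :=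
  B.rank ≤ r ∧
    ∀ p : ℝ≥0∞, 1 ≤ p → ∀ C : Matrix (Fin n) (Fin n) 𝕜, C.rank ≤ r →
      schatten p (M - B) ≤ schatten p (M - C)

/-- `⟦M⟧_r`: a best rank-`r` approximation of `M` (an `r`-truncated SVD). -/
noncomputable def truncate {n : ℕ} (M : Matrix (Fin n) (Fin n) 𝕜) (r : ℕ) :
    Matrix (Fin n) (Fin n) 𝕜 :=
  if h : ∃ B, IsBestRankApprox M B r then h.choose else 0

/-- The distribution of an `n × k` random matrix with independent standard normal
entries (matrices identified with functions `Fin n → Fin k → ℝ`). -/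
noncomputable def gaussianEnsemble (n k : ℕ) : Measure (Fin n → Fin k → ℝ) :=
  Measure.pi fun _ => Measure.pi fun _ => gaussianReal 0 1

lemma exists_svd {n : ℕ} (M : Matrix (Fin n) (Fin n) ℝ) :
    ∃ V : Matrix (Fin n) (Fin n) ℝ, Vᵀ * V = 1 ∧ V * Vᵀ = 1 ∧
      Mᵀ * M = V * Matrix.diagonal (fun j : Fin n => sval M j ^ 2) * Vᵀ := by
  have hH := (Matrix.posSemidef_conjTranspose_mul_self M).1
  let e : Equiv.Perm (Fin n) := Fin.revPerm.trans (Tuple.sort hH.eigenvalues)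
  have hs : ∀ j : Fin n, sval M j ^ 2 = hH.eigenvalues (e j) := by
    intro j
    rw [sval, dif_pos j.2, Real.sq_sqrt ((Matrix.posSemidef_conjTranspose_mul_self M).eigenvalues_nonneg _)]
    rfl
  let U : Matrix (Fin n) (Fin n) ℝ := hH.eigenvectorUnitary
  have hU1 : Uᵀ * U = 1 := by
    have := Unitary.coe_star_mul_self hH.eigenvectorUnitary
    simpa [Matrix.star_eq_conjTranspose, U] using this
  have hU2 : U * Uᵀ = 1 := by
    have := Unitary.coe_mul_star_self hH.eigenvectorUnitary
    simpa [Matrix.star_eq_conjTranspose, U] using this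
  have hsp : Mᵀ * M = U * Matrix.diagonal hH.eigenvalues * Uᵀ := by
    have := hH.spectral_theorem
    rw [Unitary.conjStarAlgAut_apply] at this
    simpa [Matrix.star_eq_conjTranspose, U] using this
  refine ⟨U.submatrix id e, ?_, ?_, ?_⟩
  · have h7 := Matrix.submatrix_mul_equiv Uᵀ U e (Equiv.refl _) e
    rw [Matrix.transpose_submatrix]
    refine h7.trans ?_
    rw [hU1]; simp
  · rw [Matrix.transpose_submatrix, Matrix.submatrix_mul_equiv, hU2]; simp
  · have : (Matrix.diagonal (fun j : Fin n => sval M j ^ 2)) = (Matrix.diagonal hH.eigenvalues).submatrix e e := by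
      rw [Matrix.submatrix_diagonal_equiv]; congr 1; funext j; exact hs j
    rw [this, Matrix.transpose_submatrix, Matrix.submatrix_mul_equiv, Matrix.submatrix_mul_equiv, hsp]
    simp

lemma sval_nonneg {n : ℕ} (M : Matrix (Fin n) (Fin n) ℝ) (i : ℕ) : 0 ≤ sval M i := by
  unfold sval; split_ifs
  · exact Real.sqrt_nonneg _
  · exact le_rfl

lemma sval_anti {n : ℕ} (M : Matrix (Fin n) (Fin n) ℝ) {i j : ℕ} (hij : i ≤ j) :
    sval M j ≤ sval M i := by
  by_cases hj : j < n
  · have hi : i < n := hij.trans_lt hj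
    rw [sval, sval, dif_pos hi, dif_pos hj]
    apply Real.sqrt_le_sqrt
    apply Tuple.monotone_sort (Matrix.posSemidef_conjTranspose_mul_self M).1.eigenvalues
    rw [Fin.rev_le_rev]
    exact hij
  · rw [sval, dif_neg hj]; exact sval_nonneg M i

lemma dot_self_eq_sum {n m : ℕ} (M : Matrix (Fin n) (Fin n) ℝ) (V : Matrix (Fin n) (Fin m) ℝ)
    (d : Fin m → ℝ) (h : Mᵀ * M = V * Matrix.diagonal d * Vᵀ) (x : Fin n → ℝ) :
    (M *ᵥ x) ⬝ᵥ (M *ᵥ x) = ∑ j, d j * (Vᵀ *ᵥ x) j ^ 2 := by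
  have : (M *ᵥ x) ⬝ᵥ (M *ᵥ x) = x ⬝ᵥ ((Mᵀ * M) *ᵥ x) := by
    rw [← Matrix.mulVec_mulVec, Matrix.dotProduct_mulVec x, Matrix.vecMul_transpose]
  rw [this, h, ← Matrix.mulVec_mulVec, ← Matrix.mulVec_mulVec, Matrix.dotProduct_mulVec,
    ← Matrix.mulVec_transpose]
  simp only [dotProduct, Matrix.mulVec_diagonal]
  exact Finset.sum_congr rfl fun j _ => by ring

lemma dot_self_orth {n : ℕ} (V : Matrix (Fin n) (Fin n) ℝ) (h : V * Vᵀ = 1) (x : Fin n → ℝ) :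
    x ⬝ᵥ x = ∑ j, (Vᵀ *ᵥ x) j ^ 2 := by
  have := dot_self_eq_sum (1 : Matrix (Fin n) (Fin n) ℝ) V (fun _ => 1) (by simp [h]) x
  simpa using this

/-- Upper bound for singular values by a test subspace. -/
lemma sval_le_of_subspace {n : ℕ} (M : Matrix (Fin n) (Fin n) ℝ) (i : ℕ) (c : ℝ) (hc : 0 ≤ c)
    (S : Submodule ℝ (Fin n → ℝ)) (hS : n ≤ Module.finrank ℝ S + i)
    (h : ∀ x ∈ S, (M *ᵥ x) ⬝ᵥ (M *ᵥ x) ≤ c ^ 2 * (x ⬝ᵥ x)) : sval M i ≤ c := by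
  by_cases hi : i < n
  swap
  · rw [sval, dif_neg hi]; exact hc
  obtain ⟨V, hV1, hV2, hV3⟩ := exists_svd M
  let f : S →ₗ[ℝ] ({j : Fin n // i < j} → ℝ) :=
    (LinearMap.funLeft ℝ ℝ (fun j : {j : Fin n // i < j} => (j : Fin n))).comp
      ((Matrix.mulVecLin Vᵀ).comp S.subtype)
  have hcard : Fintype.card {j : Fin n // i < j} = n - 1 - i := by
    have : Fintype.card {j : Fin n // i < j} = (Finset.Ioi (⟨i, hi⟩ : Fin n)).card := by
      rw [Fintype.card_subtype]; congr 1; ext j; simp [Fin.lt_def]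
    rw [this, Fin.card_Ioi]
  have hlt : Module.finrank ℝ ({j : Fin n // i < j} → ℝ) < Module.finrank ℝ S := by
    rw [Module.finrank_fintype_fun_eq_card, hcard]; omega
  have hker := LinearMap.ker_ne_bot_of_finrank_lt (f := f) hlt
  obtain ⟨x, hx, hx0⟩ := (Submodule.ne_bot_iff _).1 hker
  have hxj : ∀ j : Fin n, i < j → (Vᵀ *ᵥ (x : Fin n → ℝ)) j = 0 := by
    intro j hj
    have := congrFun (LinearMap.mem_ker.1 hx) ⟨j, hj⟩
    simpa [f, Matrix.mulVec_transpose] using this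
  have h1 := h x x.2
  rw [dot_self_eq_sum M V _ hV3] at h1
  have h2 : sval M i ^ 2 * ((x : Fin n → ℝ) ⬝ᵥ x) ≤ c ^ 2 * ((x : Fin n → ℝ) ⬝ᵥ x) := by
    refine le_trans ?_ h1
    rw [dot_self_orth V hV2, Finset.mul_sum]
    apply Finset.sum_le_sum
    intro j _
    by_cases hj : i < j
    · simp [hxj j hj]
    · exact mul_le_mul_of_nonneg_right
        (pow_le_pow_left₀ (sval_nonneg _ _) (sval_anti M (not_lt.1 hj)) 2) (sq_nonneg _)
  have hpos : 0 < (x : Fin n → ℝ) ⬝ᵥ x := by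
    rcases (dotProduct_self_star_nonneg (x : Fin n → ℝ)).lt_or_eq with hh | hh
    · simpa using hh
    · exfalso; apply hx0
      have : (x : Fin n → ℝ) = 0 := by
        apply dotProduct_self_eq_zero.1; simpa using hh.symm
      exact Subtype.ext this
  have h3 := le_of_mul_le_mul_right h2 hpos
  exact (pow_le_pow_iff_left₀ (sval_nonneg _ _) hc two_ne_zero).1 h3

/-- coordinate subspace: vanish on `p`-coordinates in the basis `V`. -/
def coordSub {n : ℕ} (V : Matrix (Fin n) (Fin n) ℝ) (p : Fin n → Prop) :
    Submodule ℝ (Fin n → ℝ) :=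
  LinearMap.ker ((LinearMap.funLeft ℝ ℝ (fun j : {j : Fin n // p j} => (j : Fin n))).comp
      (Matrix.mulVecLin Vᵀ))

lemma mem_coordSub {n : ℕ} {V : Matrix (Fin n) (Fin n) ℝ} {p : Fin n → Prop} {x : Fin n → ℝ}
    (hx : x ∈ coordSub V p) (j : Fin n) (hj : p j) : (Vᵀ *ᵥ x) j = 0 := by
  have := congrFun (LinearMap.mem_ker.1 hx) ⟨j, hj⟩
  simpa [Matrix.mulVec_transpose] using this

lemma finrank_coordSub {n : ℕ} (V : Matrix (Fin n) (Fin n) ℝ) (p : Fin n → Prop) :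
    n ≤ Module.finrank ℝ (coordSub V p) + Nat.card {j : Fin n // p j} := by
  rw [Nat.card_eq_fintype_card]
  have h := LinearMap.finrank_range_add_finrank_ker
    ((LinearMap.funLeft ℝ ℝ (fun j : {j : Fin n // p j} => (j : Fin n))).comp
      (Matrix.mulVecLin Vᵀ))
  have h2 := Submodule.finrank_le (LinearMap.range
    ((LinearMap.funLeft ℝ ℝ (fun j : {j : Fin n // p j} => (j : Fin n))).comp
      (Matrix.mulVecLin Vᵀ)))
  rw [Module.finrank_fintype_fun_eq_card] at h h2
  simp only [Fintype.card_fin] at h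
  unfold coordSub
  omega

lemma card_Ico_le {n : ℕ} (a i : ℕ) : Nat.card {j : Fin n // a ≤ (j:ℕ) ∧ (j:ℕ) < a + i} ≤ i := by
  rw [Nat.card_eq_fintype_card]
  have := Fintype.card_le_of_injective
    (fun j : {j : Fin n // a ≤ (j:ℕ) ∧ (j:ℕ) < a + i} => (⟨(j:Fin n) - a, by have := j.2; omega⟩ : Fin i))
    (by
      intro x y hxy
      have h1 := x.2; have h2 := y.2
      simp only [Fin.mk.injEq] at hxy
      apply Subtype.ext; apply Fin.ext; omega)
  simpa using this

lemma exists_good_subspace {n : ℕ} (M : Matrix (Fin n) (Fin n) ℝ) (i : ℕ) :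
    ∃ S : Submodule ℝ (Fin n → ℝ), n ≤ Module.finrank ℝ S + i ∧
      ∀ x ∈ S, (M *ᵥ x) ⬝ᵥ (M *ᵥ x) ≤ sval M i ^ 2 * (x ⬝ᵥ x) := by
  obtain ⟨V, hV1, hV2, hV3⟩ := exists_svd M
  refine ⟨coordSub V (fun j => 0 ≤ (j:ℕ) ∧ (j:ℕ) < 0 + i), ?_, ?_⟩
  · have := finrank_coordSub V (fun j => 0 ≤ (j:ℕ) ∧ (j:ℕ) < 0 + i)
    have h2 := card_Ico_le (n := n) 0 i
    omega
  · intro x hx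
    rw [dot_self_eq_sum M V _ hV3, dot_self_orth V hV2, Finset.mul_sum]
    apply Finset.sum_le_sum
    intro j _
    by_cases hj : (j:ℕ) < i
    · simp [mem_coordSub hx j ⟨Nat.zero_le _, by omega⟩]
    · exact mul_le_mul_of_nonneg_right
        (pow_le_pow_left₀ (sval_nonneg _ _) (sval_anti M (not_lt.1 hj)) 2) (sq_nonneg _)

lemma norm_le_sval {n : ℕ} (M : Matrix (Fin n) (Fin n) ℝ) (x : Fin n → ℝ) :
    (M *ᵥ x) ⬝ᵥ (M *ᵥ x) ≤ sval M 0 ^ 2 * (x ⬝ᵥ x) := by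
  obtain ⟨S, h1, h2⟩ := exists_good_subspace M 0
  apply h2
  have : S = ⊤ := Submodule.eq_top_of_finrank_eq
    (le_antisymm (Submodule.finrank_le _) (by simpa using h1))
  rw [this]; trivial

lemma dot_eq_norm {n : ℕ} (x : Fin n → ℝ) : x ⬝ᵥ x = ‖WithLp.toLp 2 x‖ ^ 2 := by
  rw [EuclideanSpace.norm_sq_eq]
  simp [dotProduct, sq]

lemma sval_zero_add_le {n : ℕ} (M N : Matrix (Fin n) (Fin n) ℝ) :
    sval (M + N) 0 ≤ sval M 0 + sval N 0 := by
  apply sval_le_of_subspace _ _ _ (add_nonneg (sval_nonneg _ _) (sval_nonneg _ _)) ⊤ (by simp)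
  intro x _
  have key : ∀ M : Matrix (Fin n) (Fin n) ℝ, ‖WithLp.toLp 2 (M *ᵥ x)‖ ≤ sval M 0 * ‖WithLp.toLp 2 x‖ := by
    intro M
    have := norm_le_sval M x
    rw [dot_eq_norm, dot_eq_norm, ← mul_pow] at this
    exact (pow_le_pow_iff_left₀ (norm_nonneg _)
      (mul_nonneg (sval_nonneg _ _) (norm_nonneg _)) two_ne_zero).1 this
  rw [dot_eq_norm, dot_eq_norm, ← mul_pow]
  apply pow_le_pow_left₀ (norm_nonneg _)
  rw [Matrix.add_mulVec, WithLp.toLp_add, add_mul]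
  exact (norm_add_le _ _).trans (add_le_add (key M) (key N))

lemma sval_weyl {n : ℕ} (M C : Matrix (Fin n) (Fin n) ℝ) (r i : ℕ) (hC : C.rank ≤ r) :
    sval M (r + i) ≤ sval (M - C) i := by
  obtain ⟨S, h1, h2⟩ := exists_good_subspace (M - C) i
  have hk := LinearMap.finrank_range_add_finrank_ker (Matrix.mulVecLin C)
  have hr : Module.finrank ℝ (LinearMap.range (Matrix.mulVecLin C)) = C.rank := rfl
  have hsi := Submodule.finrank_sup_add_finrank_inf_eq S (LinearMap.ker (Matrix.mulVecLin C))
  have hle := Submodule.finrank_le (S ⊔ (LinearMap.ker (Matrix.mulVecLin C)))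
  simp only [Module.finrank_fintype_fun_eq_card, Fintype.card_fin] at hk hle
  apply sval_le_of_subspace _ _ _ (sval_nonneg _ _) (S ⊓ (LinearMap.ker (Matrix.mulVecLin C)))
  · omega
  · intro x hx
    have hx2 : C *ᵥ x = 0 := by simpa using (Submodule.mem_inf.1 hx).2
    have := h2 x (Submodule.mem_inf.1 hx).1
    rw [Matrix.sub_mulVec, hx2, sub_zero] at this
    exact this

lemma exists_trunc {n : ℕ} (M : Matrix (Fin n) (Fin n) ℝ) (r : ℕ) :
    ∃ B : Matrix (Fin n) (Fin n) ℝ, B.rank ≤ r ∧ ∀ i, sval (M - B) i ≤ sval M (r + i) := by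
  obtain ⟨V, hV1, hV2, hV3⟩ := exists_svd M
  let D : Matrix (Fin n) (Fin n) ℝ := Matrix.diagonal (fun j : Fin n => if (j:ℕ) < r then 1 else 0)
  let E : Matrix (Fin n) (Fin n) ℝ := Matrix.diagonal (fun j : Fin n => if (j:ℕ) < r then 0 else 1)
  refine ⟨M * V * D * Vᵀ, ?_, ?_⟩
  · refine (Matrix.rank_mul_le_left _ _).trans ((Matrix.rank_mul_le_right _ _).trans ?_)
    rw [Matrix.rank_diagonal]
    have h2 := card_Ico_le (n := n) 0 r
    rw [Nat.card_eq_fintype_card] at h2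
    have hmem : ∀ j : {j : Fin n // (if (j:ℕ) < r then (1:ℝ) else 0) ≠ 0},
        0 ≤ (j.1:ℕ) ∧ (j.1:ℕ) < 0 + r := by
      intro j
      refine ⟨Nat.zero_le _, ?_⟩
      by_contra hcon; apply j.2; rw [if_neg]; omega
    refine le_trans (Fintype.card_le_of_injective (fun j => ⟨j.1, hmem j⟩) ?_) h2
    intro x y hxy; simpa [Subtype.ext_iff] using hxy
  · intro i
    have hE : M - M * V * D * Vᵀ = M * V * E * Vᵀ := by
      have : D + E = 1 := by
        simp only [D, E, Matrix.diagonal_add]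
        rw [← Matrix.diagonal_one]; congr 1; funext j; split_ifs <;> simp
      have h3 : M * V * D * Vᵀ + M * V * E * Vᵀ = M := by
        rw [← Matrix.add_mul, ← Matrix.mul_add, this, Matrix.mul_one, Matrix.mul_assoc, hV2, Matrix.mul_one]
      exact sub_eq_of_eq_add' h3.symm
    rw [hE]
    have hT : (M * V * E * Vᵀ)ᵀ * (M * V * E * Vᵀ) =
        V * Matrix.diagonal (fun j : Fin n => if (j:ℕ) < r then 0 else sval M j ^ 2) * Vᵀ := by
      have : (M * V * E * Vᵀ)ᵀ * (M * V * E * Vᵀ) = V * (E * Vᵀ * (Mᵀ * M) * V * E) * Vᵀ := by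
        simp only [Matrix.transpose_mul, Matrix.transpose_transpose, Matrix.mul_assoc]
        simp [E]
      rw [this, hV3]
      have h5 : E * Vᵀ * (V * Matrix.diagonal (fun j : Fin n => sval M j ^ 2) * Vᵀ) * V * E =
          E * (Vᵀ * V) * Matrix.diagonal (fun j : Fin n => sval M j ^ 2) * (Vᵀ * V) * E := by
        simp only [Matrix.mul_assoc]
      rw [h5, hV1]
      simp only [Matrix.mul_one, E, Matrix.diagonal_mul_diagonal]
      congr 3; funext j; split_ifs <;> simp
    apply sval_le_of_subspace _ _ _ (sval_nonneg _ _) (coordSub V (fun j => r ≤ (j:ℕ) ∧ (j:ℕ) < r + i))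
    · have := finrank_coordSub V (fun j => r ≤ (j:ℕ) ∧ (j:ℕ) < r + i)
      have h2 := card_Ico_le (n := n) r i
      omega
    · intro x hx
      rw [dot_self_eq_sum _ V _ hT, dot_self_orth V hV2, Finset.mul_sum]
      apply Finset.sum_le_sum
      intro j _
      by_cases hj : (j:ℕ) < r
      · simp only [if_pos hj, zero_mul]; positivity
      · rw [if_neg hj]
        by_cases hj2 : (j:ℕ) < r + i
        · simp [mem_coordSub hx j ⟨not_lt.1 hj, hj2⟩]
        · exact mul_le_mul_of_nonneg_right
            (pow_le_pow_left₀ (sval_nonneg _ _) (sval_anti M (not_lt.1 hj2)) 2) (sq_nonneg _)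

lemma exists_best {n : ℕ} (M : Matrix (Fin n) (Fin n) ℝ) (r : ℕ) :
    ∃ B, IsBestRankApprox M B r := by
  obtain ⟨B, hB, hs⟩ := exists_trunc M r
  refine ⟨B, hB, fun p hp C hC => ?_⟩
  have key : ∀ i, sval (M - B) i ≤ sval (M - C) i := fun i => (hs i).trans (sval_weyl M C r i hC)
  unfold schatten
  split_ifs
  · exact key 0
  · apply Real.rpow_le_rpow
    · exact Finset.sum_nonneg fun i _ => Real.rpow_nonneg (sval_nonneg _ _) _
    · exact Finset.sum_le_sum fun i _ => Real.rpow_le_rpow (sval_nonneg _ _) (key i) ENNReal.toReal_nonneg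
    · positivity

lemma truncate_spec {n : ℕ} (M : Matrix (Fin n) (Fin n) ℝ) (r : ℕ) :
    IsBestRankApprox M (truncate M r) r := by
  unfold truncate
  rw [dif_pos (exists_best M r)]
  exact (exists_best M r).choose_spec

lemma schatten_top {n : ℕ} (M : Matrix (Fin n) (Fin n) ℝ) : schatten ⊤ M = sval M 0 := by
  simp [schatten]

lemma schatten_one_ge {n : ℕ} (M C : Matrix (Fin n) (Fin n) ℝ) (r : ℕ) (hC : C.rank ≤ r) :
    ∑ j : Fin n, (if (j : ℕ) < r then 0 else sval M j) ≤ schatten 1 (M - C) := by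
  have h1 : schatten 1 (M - C) = ∑ i ∈ Finset.range n, sval (M - C) i := by
    simp [schatten]
  rw [h1]
  have h2 : ∑ i ∈ Finset.range n, sval M (r + i) ≤ ∑ i ∈ Finset.range n, sval (M - C) i :=
    Finset.sum_le_sum fun i _ => sval_weyl M C r i hC
  refine le_trans ?_ h2
  rw [Fin.sum_univ_eq_sum_range (fun j => if j < r then 0 else sval M j) n]
  have h3 : ∑ i ∈ Finset.range n, sval M (r + i)
      = ∑ j ∈ (Finset.range n).image (fun i => r + i), sval M j := by
    rw [Finset.sum_image]; intro a _ b _ h; simpa using h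
  have h4 : ∑ j ∈ Finset.range n, (if j < r then 0 else sval M j) =
      ∑ j ∈ (Finset.range n).filter (fun j => ¬ j < r), sval M j := by
    rw [Finset.sum_filter]; exact Finset.sum_congr rfl fun j _ => by split_ifs <;> rfl
  rw [h3, h4]
  apply Finset.sum_le_sum_of_subset_of_nonneg
  · intro j hj
    simp only [Finset.mem_filter, Finset.mem_range, Finset.mem_image] at hj ⊢
    exact ⟨j - r, by omega, by omega⟩
  · intro j _ _; exact sval_nonneg _ _

lemma psd_eig {n : ℕ} (A : Matrix (Fin n) (Fin n) ℝ) (hA : A.PosSemidef) (v : Fin n → ℝ) (s : ℝ)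
    (hs : 0 ≤ s) (h : A *ᵥ (A *ᵥ v) = s ^ 2 • v) : A *ᵥ v = s • v := by
  have hT : Aᵀ = A := by simpa using hA.1.eq
  rcases hs.lt_or_eq with hpos | h0
  · set w := A *ᵥ v - s • v with hw
    have h1 : A *ᵥ w = - (s • w) := by
      rw [hw, Matrix.mulVec_sub, h, Matrix.mulVec_smul, smul_sub, smul_smul, sq]; abel
    have h2 : 0 ≤ w ⬝ᵥ (A *ᵥ w) := by simpa using hA.dotProduct_mulVec_nonneg w
    rw [h1, dotProduct_neg, dotProduct_smul, smul_eq_mul] at h2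
    have h3 : 0 ≤ w ⬝ᵥ w := by simpa using dotProduct_self_star_nonneg w
    have h4 : w ⬝ᵥ w = 0 := by
      by_contra hne
      have : 0 < w ⬝ᵥ w := lt_of_le_of_ne h3 (Ne.symm hne)
      nlinarith [mul_pos hpos this]
    exact sub_eq_zero.1 (dotProduct_self_eq_zero.1 h4)
  · subst h0
    have h1 : (A *ᵥ v) ⬝ᵥ (A *ᵥ v) = 0 := by
      have : (A *ᵥ v) ⬝ᵥ (A *ᵥ v) = v ⬝ᵥ (A *ᵥ (A *ᵥ v)) := by
        rw [Matrix.dotProduct_mulVec v, ← Matrix.mulVec_transpose, hT]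
      rw [this, h]; simp
    rw [dotProduct_self_eq_zero.1 h1]; simp

lemma psd_diag {n : ℕ} (A : Matrix (Fin n) (Fin n) ℝ) (hA : A.PosSemidef) :
    ∃ V : Matrix (Fin n) (Fin n) ℝ, Vᵀ * V = 1 ∧ V * Vᵀ = 1 ∧
      A = V * Matrix.diagonal (fun j : Fin n => sval A j) * Vᵀ := by
  have hT : Aᵀ = A := by simpa using hA.1.eq
  obtain ⟨V, hV1, hV2, hV3⟩ := exists_svd A
  refine ⟨V, hV1, hV2, ?_⟩
  have hAV : A * V = V * Matrix.diagonal (fun j : Fin n => sval A j) := by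
    have h1 : A * A * V = V * Matrix.diagonal (fun j : Fin n => sval A j ^ 2) := by
      rw [hT] at hV3
      rw [hV3, Matrix.mul_assoc, hV1, Matrix.mul_one]
    ext i j
    have := psd_eig A hA (fun l => V l j) (sval A j) (sval_nonneg _ _) (by
      funext l
      have h2 := congrFun (congrFun h1 l) j
      rw [Matrix.mul_diagonal, Matrix.mul_assoc] at h2
      simp only [Pi.smul_apply, smul_eq_mul]
      rw [mul_comm, ← h2]; rfl)
    have h2 := congrFun this i
    rw [Matrix.mul_diagonal, mul_comm]
    exact h2
  rw [← hAV, Matrix.mul_assoc, hV2, Matrix.mul_one]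

lemma trace_orth {n : ℕ} (V D : Matrix (Fin n) (Fin n) ℝ) (h : Vᵀ * V = 1) :
    (V * D * Vᵀ).trace = D.trace := by
  rw [Matrix.trace_mul_comm, ← Matrix.mul_assoc, h, Matrix.one_mul]

lemma sval_zero_le_trace {n : ℕ} (A : Matrix (Fin n) (Fin n) ℝ) (hA : A.PosSemidef) :
    sval A 0 ≤ A.trace := by
  obtain ⟨V, hV1, hV2, h⟩ := psd_diag A hA
  have : A.trace = ∑ j : Fin n, sval A j := by
    conv_lhs => rw [h, trace_orth _ _ hV1, Matrix.trace_diagonal]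
  rw [this]
  by_cases hn : 0 < n
  · exact Finset.single_le_sum (f := fun j : Fin n => sval A j) (fun j _ => sval_nonneg A j)
      (Finset.mem_univ (⟨0, hn⟩ : Fin n))
  · rw [sval, dif_neg hn]; exact Finset.sum_nonneg fun j _ => sval_nonneg A j

lemma exists_pinv {k : ℕ} (M : Matrix (Fin k) (Fin k) ℝ) (hM : M.PosSemidef) :
    ∃ X, IsMoorePenrose M X := by
  obtain ⟨V, hV1, hV2, h⟩ := psd_diag M hM
  set d := fun j : Fin k => sval M j
  have key : ∀ P Q : Matrix (Fin k) (Fin k) ℝ, (V * P * Vᵀ) * (V * Q * Vᵀ) = V * (P * Q) * Vᵀ := by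
    intro P Q
    have : (V * P * Vᵀ) * (V * Q * Vᵀ) = V * P * (Vᵀ * V) * Q * Vᵀ := by
      simp only [Matrix.mul_assoc]
    rw [this, hV1, Matrix.mul_one, Matrix.mul_assoc V P Q]
  refine ⟨V * Matrix.diagonal (fun j => (d j)⁻¹) * Vᵀ, ?_⟩
  rw [h]
  refine ⟨?_, ?_, ?_, ?_⟩
  · rw [key, key, Matrix.diagonal_mul_diagonal, Matrix.diagonal_mul_diagonal]
    congr 3; funext j; exact mul_inv_mul_cancel (d j)
  · rw [key, key, Matrix.diagonal_mul_diagonal, Matrix.diagonal_mul_diagonal]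
    congr 3; funext j; simpa using mul_inv_mul_cancel (d j)⁻¹
  · rw [key, Matrix.diagonal_mul_diagonal]; simp [Matrix.mul_assoc]
  · rw [key, Matrix.diagonal_mul_diagonal]; simp [Matrix.mul_assoc]

lemma psd_conj {n k : ℕ} (A : Matrix (Fin n) (Fin n) ℝ) (hA : A.PosSemidef)
    (B : Matrix (Fin n) (Fin k) ℝ) : (Bᵀ * A * B).PosSemidef := by
  have := hA.conjTranspose_mul_mul_same B
  rwa [Matrix.conjTranspose_eq_transpose_of_trivial] at this

lemma psd_trace {n : ℕ} (A : Matrix (Fin n) (Fin n) ℝ) (hA : A.PosSemidef) : 0 ≤ A.trace :=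
  hA.trace_nonneg

lemma nystrom_spec {n k : ℕ} (A : Matrix (Fin n) (Fin n) ℝ) (hA : A.PosSemidef)
    (Ω : Matrix (Fin n) (Fin k) ℝ) :
    (A - nystrom A Ω).PosSemidef ∧ ∀ X : Matrix (Fin k) (Fin n) ℝ,
      (A - nystrom A Ω).trace ≤ ((1 - Ω * X)ᵀ * A * (1 - Ω * X)).trace := by
  have hT : Aᵀ = A := by simpa using hA.1.eq
  set M := Ωᴴ * A * Ω with hMdef
  have hM : M.PosSemidef := hA.conjTranspose_mul_mul_same Ω
  have hMT : Mᵀ = M := by simpa using hM.1.eq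
  have hN : nystrom A Ω = A * Ω * pinv M * Ωᵀ * A := by
    simp [nystrom, hMdef]
  obtain ⟨h1, h2, h3, h4⟩ : IsMoorePenrose M (pinv M) := by
    unfold pinv; rw [dif_pos (exists_pinv M hM)]; exact (exists_pinv M hM).choose_spec
  set P := pinv M
  simp only [Matrix.conjTranspose_eq_transpose_of_trivial] at h3 h4 hMdef
  have hP : P = Pᵀ * M * P := by
    have : Pᵀ * M = P * M := by
      have g1 : Pᵀ * M = M * P := by rw [← h3, Matrix.transpose_mul, hMT]
      have g2 : M * Pᵀ * M = M := by
        have := congrArg Matrix.transpose h1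
        simpa [hMT, Matrix.mul_assoc] using this
      have g3 : P * M = (P * M) * (M * P) := by
        rw [← g1]
        conv_lhs => rw [← g2]
        simp only [Matrix.mul_assoc]
      have g4 := congrArg Matrix.transpose g3
      rw [h4, Matrix.transpose_mul, h3, h4, ← g1] at g4
      rw [g4, Matrix.mul_assoc Pᵀ, ← Matrix.mul_assoc M P M, h1]
    rw [this, h2]
  have hPT : Pᵀ = P := by
    conv_lhs => rw [hP]
    conv_rhs => rw [hP]
    simp [hMT, Matrix.mul_assoc]
  -- A Ω P M = A Ω
  have h5 : A * Ω * P * M = A * Ω := by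
    have hz : A * (Ω * (1 - P * M)) = 0 := by
      have hq : (Ω * (1 - P * M))ᵀ * A * (Ω * (1 - P * M)) = 0 := by
        have : (Ω * (1 - P * M))ᵀ * A * (Ω * (1 - P * M)) = (1 - P * M)ᵀ * (M - M * P * M) := by
          rw [Matrix.transpose_mul, hMdef]
          simp only [Matrix.mul_sub, Matrix.mul_assoc, Matrix.mul_one]
        rw [this, h1, sub_self, Matrix.mul_zero]
      ext i j
      have h6 := congrFun (congrFun hq j) j
      have h7 : (fun l => (Ω * (1 - P * M) : Matrix (Fin n) (Fin k) ℝ) l j) ⬝ᵥ (A *ᵥ (fun l => (Ω * (1 - P * M) : Matrix (Fin n) (Fin k) ℝ) l j)) = 0 := by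
        rw [Matrix.mul_assoc] at h6
        exact h6
      have h8 := (hA.dotProduct_mulVec_zero_iff _).1 (by simpa using h7)
      exact congrFun h8 i
    rw [Matrix.mul_sub, Matrix.mul_sub, Matrix.mul_one, sub_eq_zero] at hz
    simp only [Matrix.mul_assoc]; exact hz.symm
  have h5' : M * P * Ωᵀ * A = Ωᵀ * A := by
    have := congrArg Matrix.transpose h5
    simpa [hMT, hPT, hT, Matrix.mul_assoc] using this
  have hdecomp : ∀ X : Matrix (Fin k) (Fin n) ℝ,
      (1 - Ω * X)ᵀ * A * (1 - Ω * X) = (A - nystrom A Ω)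
        + (X - P * Ωᵀ * A)ᵀ * M * (X - P * Ωᵀ * A) := by
    intro X
    have e1 : (1 - Ω * X)ᵀ * A * (1 - Ω * X) = A - A * Ω * X - Xᵀ * (Ωᵀ * A) + Xᵀ * M * X := by
      rw [hMdef]
      simp only [Matrix.transpose_sub, Matrix.transpose_mul, Matrix.transpose_one, Matrix.mul_sub, Matrix.sub_mul,
        Matrix.mul_one, Matrix.one_mul, Matrix.mul_assoc]
      abel
    have e2 : (X - P * Ωᵀ * A)ᵀ * M * (X - P * Ωᵀ * A) =
        Xᵀ * M * X - Xᵀ * (M * P * Ωᵀ * A) - (A * Ω * P * M) * X + A * Ω * P * (M * P * Ωᵀ * A) := by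
      simp only [Matrix.transpose_sub, Matrix.transpose_mul, Matrix.transpose_transpose, Matrix.mul_sub, Matrix.sub_mul,
        Matrix.mul_assoc, hPT, hT]
      abel
    rw [e1, e2, h5, h5', hN]
    simp only [Matrix.mul_assoc]
    abel
  have hpsd : (A - nystrom A Ω).PosSemidef := by
    have := hdecomp (P * Ωᵀ * A)
    rw [sub_self, Matrix.mul_zero, add_zero] at this
    rw [← this]
    exact psd_conj A hA _
  refine ⟨hpsd, fun X => ?_⟩
  rw [hdecomp X, Matrix.trace_add]
  exact le_add_of_nonneg_right (psd_trace _ (psd_conj M hM _))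

/-- Deterministic error bound in rotated coordinates. -/
lemma det_bound {n k : ℕ} (A : Matrix (Fin n) (Fin n) ℝ) (hA : A.PosSemidef)
    (V : Matrix (Fin n) (Fin n) ℝ) (hV1 : Vᵀ * V = 1) (hV2 : V * Vᵀ = 1)
    (hAV : A = V * Matrix.diagonal (fun j : Fin n => sval A j) * Vᵀ) (ϱ : ℕ)
    (W : Matrix (Fin n) (Fin k) ℝ) (c : Fin n → Fin k → ℝ)
    (hc : ∀ i j : Fin n, (i : ℕ) < ϱ → (j : ℕ) < ϱ → c i ⬝ᵥ W j = if i = j then 1 else 0) :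
    sval (A - nystrom A (V * W)) 0 ≤
      ∑ j : Fin n, (if (j : ℕ) < ϱ then 0 else sval A j) *
        (1 + ∑ i : Fin n, if (i : ℕ) < ϱ then (c i ⬝ᵥ W j) ^ 2 else 0) := by
  obtain ⟨hpsd, hX⟩ := nystrom_spec A hA (V * W)
  refine (sval_zero_le_trace _ hpsd).trans ?_
  let Y : Matrix (Fin k) (Fin n) ℝ := Matrix.of fun a i => if (i : ℕ) < ϱ then c i a else 0
  refine (hX (Y * Vᵀ)).trans ?_
  set D := Matrix.diagonal (fun j : Fin n => sval A j)
  have e1 : 1 - V * W * (Y * Vᵀ) = V * (1 - W * Y) * Vᵀ := by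
    rw [Matrix.mul_sub, Matrix.sub_mul, Matrix.mul_one, hV2]; simp only [Matrix.mul_assoc]
  have e2 : (1 - V * W * (Y * Vᵀ))ᵀ * A * (1 - V * W * (Y * Vᵀ)) =
      V * ((1 - W * Y)ᵀ * D * (1 - W * Y)) * Vᵀ := by
    rw [e1, hAV]
    have : (V * (1 - W * Y) * Vᵀ)ᵀ * (V * D * Vᵀ) * (V * (1 - W * Y) * Vᵀ) =
       V * ((1 - W * Y)ᵀ * (Vᵀ * V) * D * (Vᵀ * V) * (1 - W * Y)) * Vᵀ := by
      simp only [Matrix.transpose_mul, Matrix.transpose_transpose, Matrix.mul_assoc]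
    rw [this, hV1, Matrix.mul_one, Matrix.mul_one]
  rw [e2, trace_orth _ _ hV1]
  have e3 : ((1 - W * Y)ᵀ * D * (1 - W * Y)).trace =
      ∑ j : Fin n, sval A j * ∑ l : Fin n, (1 - W * Y : Matrix (Fin n) (Fin n) ℝ) j l ^ 2 := by
    simp only [Matrix.trace, Matrix.diag, Matrix.mul_apply (N := (1 - W * Y)), D, Matrix.mul_diagonal,
      Matrix.transpose_apply]
    rw [Finset.sum_comm]
    apply Finset.sum_congr rfl; intro j _
    rw [Finset.mul_sum]
    apply Finset.sum_congr rfl; intro l _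
    ring
  rw [e3]
  have hWY : ∀ j l : Fin n, (W * Y) j l = if (l : ℕ) < ϱ then c l ⬝ᵥ W j else 0 := by
    intro j l
    rw [Matrix.mul_apply]
    split_ifs with hl
    · simp [Y, hl, dotProduct, mul_comm]
    · simp [Y, hl]
  apply Finset.sum_le_sum
  intro j _
  by_cases hj : (j : ℕ) < ϱ
  · rw [if_pos hj, zero_mul]
    apply le_of_eq
    have : ∀ l, (1 - W * Y : Matrix (Fin n) (Fin n) ℝ) j l = 0 := by
      intro l
      rw [Matrix.sub_apply, hWY, Matrix.one_apply]
      by_cases hl : (l : ℕ) < ϱ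
      · rw [if_pos hl, hc l j hl hj]; simp [eq_comm]
      · rw [if_neg hl, if_neg]; simp
        rintro rfl; exact hl hj
    simp [this]
  · rw [if_neg hj]
    apply le_of_eq
    congr 1
    have : ∀ l, (1 - W * Y : Matrix (Fin n) (Fin n) ℝ) j l ^ 2 = (if j = l then 1 else 0) +
        if (l : ℕ) < ϱ then (c l ⬝ᵥ W j) ^ 2 else 0 := by
      intro l
      rw [Matrix.sub_apply, hWY, Matrix.one_apply]
      by_cases hl : (l : ℕ) < ϱ
      · have : j ≠ l := by rintro rfl; exact hj hl
        simp [hl, this]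
      · simp only [if_neg hl]; split_ifs <;> simp
    simp only [this, Finset.sum_add_distrib]
    simp

/-- standard Gaussian on `κ → ℝ` -/
noncomputable abbrev gam (κ : Type*) [Fintype κ] : Measure (κ → ℝ) :=
  Measure.pi fun _ => gaussianReal 0 1

lemma rot {κ : Type*} [Fintype κ] (v : κ → κ → ℝ)
    (hv : ∀ i j, v i ⬝ᵥ v j = if i = j then 1 else 0) :
    MeasurePreserving (fun (x : κ → ℝ) (i : κ) => v i ⬝ᵥ x) (gam κ) (gam κ) := by
  have hin : ∀ x y : κ → ℝ, inner ℝ (WithLp.toLp 2 x : EuclideanSpace ℝ κ) (WithLp.toLp 2 y) = x ⬝ᵥ y := by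
    intro x y
    simp [PiLp.inner_apply, dotProduct, mul_comm]
  have hon : Orthonormal ℝ ((Set.univ : Set κ).domRestrict (fun i => (WithLp.toLp 2 (v i) : EuclideanSpace ℝ κ))) := by
    rw [orthonormal_iff_ite]
    intro i j
    simp only [Set.domRestrict_apply, hin, hv, Subtype.ext_iff]
  obtain ⟨b, hb⟩ := hon.exists_orthonormalBasis_extension_of_card_eq (by simp)
  have hfun : (fun (x : κ → ℝ) (i : κ) => v i ⬝ᵥ x) =
      (WithLp.ofLp) ∘ b.repr ∘ (WithLp.toLp 2 : (κ → ℝ) → EuclideanSpace ℝ κ) := by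
    funext x i
    simp only [Function.comp_apply, b.repr_apply_apply, hb i (Set.mem_univ _), hin]
  have hm1 : Measurable (WithLp.toLp 2 : (κ → ℝ) → EuclideanSpace ℝ κ) := by fun_prop
  have hm2 : Measurable (WithLp.ofLp : EuclideanSpace ℝ κ → (κ → ℝ)) := by fun_prop
  have hm3 : Measurable b.repr := b.repr.continuous.measurable
  have h1 : (gam κ).map (WithLp.toLp 2) = stdGaussian (EuclideanSpace ℝ κ) := map_pi_eq_stdGaussian
  have h2 : (stdGaussian (EuclideanSpace ℝ κ)).map WithLp.ofLp = gam κ := by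
    rw [← h1, Measure.map_map hm2 hm1]
    exact Measure.map_id
  refine ⟨by rw [hfun]; exact hm2.comp (hm3.comp hm1), ?_⟩
  rw [hfun, ← Measure.map_map hm2 (hm3.comp hm1), ← Measure.map_map hm3 hm1, h1, stdGaussian_map, h2]

lemma second_moment {κ : Type*} [Fintype κ] (c : κ → ℝ) :
    ∫⁻ w, ENNReal.ofReal ((c ⬝ᵥ w) ^ 2) ∂(gam κ) = ENNReal.ofReal (c ⬝ᵥ c) := by
  have hm1 : Measurable (WithLp.toLp 2 : (κ → ℝ) → EuclideanSpace ℝ κ) := by fun_prop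
  let L : StrongDual ℝ (EuclideanSpace ℝ κ) := innerSL ℝ (WithLp.toLp 2 c)
  have hL : ∀ w : κ → ℝ, L (WithLp.toLp 2 w) = c ⬝ᵥ w := by
    intro w
    simp [L, PiLp.inner_apply, dotProduct, mul_comm]
  have h1 : ∫⁻ w, ENNReal.ofReal ((c ⬝ᵥ w) ^ 2) ∂(gam κ) =
      ∫⁻ w, ENNReal.ofReal ((L w) ^ 2) ∂(stdGaussian (EuclideanSpace ℝ κ)) := by
    rw [← map_pi_eq_stdGaussian, lintegral_map (by fun_prop) hm1]
    simp only [hL]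
  have hint : Integrable (fun w => L w ^ 2) (stdGaussian (EuclideanSpace ℝ κ)) :=
    (IsGaussian.memLp_dual _ L 2 (by simp)).integrable_sq
  rw [h1, ← ofReal_integral_eq_lintegral_ofReal hint (Filter.Eventually.of_forall fun _ => sq_nonneg _)]
  congr 1
  have h2 := variance_dual_stdGaussian L
  rw [variance_of_integral_eq_zero (by fun_prop) (integral_strongDual_stdGaussian L)] at h2
  rw [h2]
  simp only [L, innerSL_apply_norm]
  rw [EuclideanSpace.norm_sq_eq]
  simp [dotProduct, sq]

lemma gauss_exp (s : ℝ) (hs : 0 < s) :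
    ∫⁻ x, ENNReal.ofReal (Real.exp (-(s * x ^ 2))) ∂(gaussianReal 0 1) =
      ENNReal.ofReal ((1 + 2 * s) ^ (-(1 / 2) : ℝ)) := by
  have hint : Integrable (fun x => Real.exp (-(s * x ^ 2))) (gaussianReal 0 1) := by
    apply Integrable.of_bound (C := 1) (by fun_prop)
    refine Filter.Eventually.of_forall fun x => ?_
    rw [Real.norm_eq_abs, abs_of_pos (Real.exp_pos _), Real.exp_le_one_iff]
    have := mul_nonneg hs.le (sq_nonneg x); linarith
  rw [← ofReal_integral_eq_lintegral_ofReal hint (Filter.Eventually.of_forall fun _ => (Real.exp_pos _).le)]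
  congr 1
  rw [integral_gaussianReal_eq_integral_smul one_ne_zero]
  have h1 : ∀ x : ℝ, gaussianPDFReal 0 1 x • Real.exp (-(s * x ^ 2)) =
      (√(2 * Real.pi))⁻¹ * Real.exp (-(1 / 2 + s) * x ^ 2) := by
    intro x
    rw [gaussianPDFReal, smul_eq_mul, mul_assoc, ← Real.exp_add]
    simp only [NNReal.coe_one, mul_one, sub_zero]
    congr 2; ring
  simp_rw [h1]
  rw [integral_const_mul, integral_gaussian, ← Real.sqrt_inv, ← Real.sqrt_mul (by positivity),
    Real.rpow_neg (by positivity), ← Real.sqrt_eq_rpow, ← Real.sqrt_inv]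
  congr 1
  have := Real.pi_pos
  field_simp

lemma int_rpow (m : ℕ) (hm : 3 ≤ m) :
    ∫⁻ s in Set.Ioi (0:ℝ), ENNReal.ofReal ((1 + 2 * s) ^ (-(m / 2) : ℝ)) =
      ENNReal.ofReal (1 / ((m : ℝ) - 2)) := by
  have hm' : (3:ℝ) ≤ m := by exact_mod_cast hm
  have hderiv : ∀ x ∈ Set.Ici (0:ℝ), HasDerivAt (fun s : ℝ => -(1 / ((m:ℝ) - 2)) * (1 + 2 * s) ^ (1 - (m / 2) : ℝ))
      ((1 + 2 * x) ^ (-(m / 2) : ℝ)) x := by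
    intro x hx
    have hx0 : (0:ℝ) ≤ x := hx
    have h1 : HasDerivAt (fun s : ℝ => 1 + 2 * s) 2 x := by
      simpa using ((hasDerivAt_id x).const_mul 2).const_add 1
    have h2 := (h1.rpow_const (p := (1 - (m / 2) : ℝ)) (Or.inl (by positivity))).const_mul (-(1 / ((m:ℝ) - 2)))
    have h3 : (m:ℝ) - 2 ≠ 0 := by linarith
    rw [show (1 - (m:ℝ) / 2 - 1) = -(m / 2 : ℝ) by ring] at h2
    have h4 : -(1 / ((m:ℝ) - 2)) * (2 * (1 - (m:ℝ) / 2) * (1 + 2 * x) ^ (-(m / 2) : ℝ)) =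
        (1 + 2 * x) ^ (-(m / 2) : ℝ) := by
      field_simp
      ring
    rw [h4] at h2
    exact h2
  have hpos : ∀ x ∈ Set.Ioi (0:ℝ), 0 ≤ (1 + 2 * x) ^ (-(m / 2) : ℝ) := by
    intro x hx
    have hx0 : (0:ℝ) < x := hx
    positivity
  have hlim : Filter.Tendsto (fun s : ℝ => -(1 / ((m:ℝ) - 2)) * (1 + 2 * s) ^ (1 - (m / 2) : ℝ))
      Filter.atTop (nhds 0) := by
    have h1 : Filter.Tendsto (fun s : ℝ => 1 + 2 * s) Filter.atTop Filter.atTop :=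
      Filter.tendsto_atTop_add_const_left _ _ (Filter.tendsto_id.const_mul_atTop two_pos)
    have h2 := (tendsto_rpow_neg_atTop (y := (m / 2 - 1 : ℝ)) (by linarith)).comp h1
    have h3 := h2.const_mul (-(1 / ((m:ℝ) - 2)))
    simp only [mul_zero] at h3
    refine h3.congr fun s => ?_
    simp only [Function.comp_apply]
    congr 2; ring
  have hI := integrableOn_Ioi_deriv_of_nonneg' hderiv hpos hlim
  rw [← ofReal_integral_eq_lintegral_ofReal hI
    ((ae_restrict_iff' measurableSet_Ioi).2 (Filter.Eventually.of_forall hpos)),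
    integral_Ioi_of_hasDerivAt_of_tendsto' hderiv hI hlim]
  simp

lemma inv_le_lintegral_exp (t : ℝ) (ht : 0 ≤ t) :
    (ENNReal.ofReal t)⁻¹ ≤ ∫⁻ s in Set.Ioi (0:ℝ), ENNReal.ofReal (Real.exp (-(s * t))) := by
  rcases ht.lt_or_eq with hpos | h0
  · have h1 := integral_exp_mul_Ioi (a := -t) (by linarith) 0
    have hI := integrableOn_exp_mul_Ioi (a := -t) (by linarith) 0
    have h2 : ∀ s : ℝ, -(s * t) = -t * s := fun s => by ring
    simp_rw [h2]
    rw [← ofReal_integral_eq_lintegral_ofReal hI (Filter.Eventually.of_forall fun _ => (Real.exp_pos _).le),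
      h1, ← ENNReal.ofReal_inv_of_pos hpos]
    apply le_of_eq; congr 1
    simp
  · subst h0
    simp

lemma chi_inv {κ : Type*} [Fintype κ] (v : κ → κ → ℝ)
    (hv : ∀ i j, v i ⬝ᵥ v j = if i = j then 1 else 0) (J : Finset κ) (hJ : 3 ≤ J.card) :
    ∫⁻ y, (ENNReal.ofReal (∑ a ∈ J, (v a ⬝ᵥ y) ^ 2))⁻¹ ∂(gam κ) ≤
      ENNReal.ofReal (1 / ((J.card : ℝ) - 2)) := by
  have h0 : ∫⁻ y, (ENNReal.ofReal (∑ a ∈ J, (v a ⬝ᵥ y) ^ 2))⁻¹ ∂(gam κ) =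
      ∫⁻ x, (ENNReal.ofReal (∑ a ∈ J, (x a) ^ 2))⁻¹ ∂(gam κ) := by
    rw [← (rot v hv).lintegral_comp (f := fun x => (ENNReal.ofReal (∑ a ∈ J, (x a) ^ 2))⁻¹) (by fun_prop)]
  rw [h0]
  calc ∫⁻ x, (ENNReal.ofReal (∑ a ∈ J, (x a) ^ 2))⁻¹ ∂(gam κ)
      ≤ ∫⁻ x, (∫⁻ s in Set.Ioi (0:ℝ), ENNReal.ofReal (Real.exp (-(s * ∑ a ∈ J, (x a) ^ 2)))) ∂(gam κ) :=
        lintegral_mono fun x => inv_le_lintegral_exp _ (Finset.sum_nonneg fun _ _ => sq_nonneg _)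
    _ = ∫⁻ s in Set.Ioi (0:ℝ), (∫⁻ x, ENNReal.ofReal (Real.exp (-(s * ∑ a ∈ J, (x a) ^ 2))) ∂(gam κ)) :=
        lintegral_lintegral_swap (by fun_prop)
    _ = ∫⁻ s in Set.Ioi (0:ℝ), ENNReal.ofReal ((1 + 2 * s) ^ (-((J.card : ℝ) / 2) : ℝ)) := by
        apply setLIntegral_congr_fun measurableSet_Ioi
        intro s hs
        have hs0 : (0:ℝ) < s := hs
        have h1 : ∀ x : κ → ℝ, ENNReal.ofReal (Real.exp (-(s * ∑ a ∈ J, (x a) ^ 2))) =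
            ∏ a ∈ J, ENNReal.ofReal (Real.exp (-(s * (x a) ^ 2))) := by
          intro x
          rw [← ENNReal.ofReal_prod_of_nonneg (fun _ _ => (Real.exp_pos _).le), ← Real.exp_sum,
            Finset.mul_sum, Finset.sum_neg_distrib]
        simp only [h1]
        have hind : iIndepFun (fun (a : κ) (x : κ → ℝ) => ENNReal.ofReal (Real.exp (-(s * (x a) ^ 2)))) (gam κ) :=
          iIndepFun_pi (X := fun _ (t : ℝ) => ENNReal.ofReal (Real.exp (-(s * t ^ 2))))
            (fun a => by fun_prop)
        rw [lintegral_prod_eq_prod_lintegral_of_indepFun J _ hind (fun a => by fun_prop)]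
        have h2 : ∀ a : κ, ∫⁻ x, ENNReal.ofReal (Real.exp (-(s * (x a) ^ 2))) ∂(gam κ) =
            ENNReal.ofReal ((1 + 2 * s) ^ (-(1 / 2) : ℝ)) := by
          intro a
          rw [← gauss_exp s hs0]
          exact (measurePreserving_eval (fun _ : κ => gaussianReal 0 1) a).lintegral_comp
            (f := fun t => ENNReal.ofReal (Real.exp (-(s * t ^ 2)))) (by fun_prop)
        simp only [h2, Finset.prod_const]
        rw [← ENNReal.ofReal_pow (by positivity), ← Real.rpow_natCast, ← Real.rpow_mul (by positivity)]
        congr 2; ring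
    _ = _ := int_rpow _ hJ

lemma uncurry_pres (n k : ℕ) : MeasurePreserving
    (fun (ω : Fin n → Fin k → ℝ) (p : Fin n × Fin k) => ω p.1 p.2)
    (gaussianEnsemble n k) (gam (Fin n × Fin k)) := by
  have hm : Measurable (fun (ω : Fin n → Fin k → ℝ) (p : Fin n × Fin k) => ω p.1 p.2) := by fun_prop
  refine ⟨hm, ?_⟩
  symm
  apply Measure.pi_eq
  intro s hs
  rw [Measure.map_apply hm (MeasurableSet.univ_pi hs)]
  have : (fun (ω : Fin n → Fin k → ℝ) (p : Fin n × Fin k) => ω p.1 p.2) ⁻¹' (Set.univ.pi s) =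
      Set.univ.pi (fun i => Set.univ.pi (fun a => s (i, a))) := by
    ext ω; simp
  rw [this, gaussianEnsemble, Measure.pi_pi]
  simp only [Measure.pi_pi]
  rw [Fintype.prod_prod_type]

lemma curry_pres (n k : ℕ) : MeasurePreserving
    (fun (x : Fin n × Fin k → ℝ) (i : Fin n) (a : Fin k) => x (i, a))
    (gam (Fin n × Fin k)) (gaussianEnsemble n k) := by
  have hm : Measurable (fun (x : Fin n × Fin k → ℝ) (i : Fin n) (a : Fin k) => x (i, a)) := by fun_prop
  refine ⟨hm, ?_⟩
  rw [← (uncurry_pres n k).map_eq, Measure.map_map hm (uncurry_pres n k).measurable]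
  exact Measure.map_id

lemma ensemble_rot {n k : ℕ} (V : Matrix (Fin n) (Fin n) ℝ) (hV : V * Vᵀ = 1) :
    MeasurePreserving (fun (W : Fin n → Fin k → ℝ) => (fun i a => (V * Matrix.of W) i a : Fin n → Fin k → ℝ))
      (gaussianEnsemble n k) (gaussianEnsemble n k) := by
  have h := (curry_pres n k).comp ((rot (κ := Fin n × Fin k)
    (fun p q => if p.2 = q.2 then V p.1 q.1 else 0) ?_).comp (uncurry_pres n k))
  · convert h using 1
    funext W i a
    simp only [Function.comp_apply, dotProduct, Fintype.sum_prod_type, Matrix.mul_apply]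
    apply Finset.sum_congr rfl; intro j _
    simp
  · rintro ⟨i, a⟩ ⟨j, b⟩
    have h1 := congrFun (congrFun hV i) j
    rw [Matrix.mul_apply, Matrix.one_apply] at h1
    simp only [dotProduct, Fintype.sum_prod_type, Prod.mk.injEq]
    by_cases hab : a = b
    · subst hab
      simp only [and_true, ← h1]
      apply Finset.sum_congr rfl; intro l _
      simp
    · have : ∀ l (x : Fin k), (if a = x then V i l else 0) * (if b = x then V j l else 0) = 0 := by
        intro l x
        by_cases h1 : a = x
        · have : b ≠ x := by rintro rfl; exact hab h1
          simp [this]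
        · simp [h1]
      simp [this, hab]

/-- Squared distance of `x i` to the span of the others, with rational coefficients. -/
noncomputable def dist2 {ι : Type*} [Fintype ι] {k : ℕ} (x : ι → Fin k → ℝ) (i : ι) : ℝ≥0∞ :=
  ⨅ a : ι → ℚ, ENNReal.ofReal (∑ b : Fin k, (x i b - ∑ l, if l = i then 0 else (a l : ℝ) * x l b) ^ 2)

lemma dist2_measurable {ι : Type*} [Fintype ι] {k : ℕ} (i : ι) :
    Measurable (fun x : ι → Fin k → ℝ => dist2 x i) := by
  unfold dist2
  apply Measurable.iInf
  intro a
  apply ENNReal.measurable_ofReal.comp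
  apply Finset.measurable_sum
  intro b _
  apply Measurable.pow_const
  apply Measurable.sub (by fun_prop)
  apply Finset.measurable_sum
  intro l _
  split_ifs
  · exact measurable_const
  · fun_prop

lemma dist2_le {ι : Type*} [Fintype ι] {k : ℕ} (x : ι → Fin k → ℝ) (i : ι) (a : ι → ℝ) :
    dist2 x i ≤ ENNReal.ofReal (∑ b : Fin k, (x i b - ∑ l, if l = i then 0 else a l * x l b) ^ 2) := by
  have hd : DenseRange (fun (q : ι → ℚ) (l : ι) => (q l : ℝ)) :=
    DenseRange.piMap (fun _ => Rat.denseRange_cast)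
  refine hd.induction_on (p := fun a : ι → ℝ => dist2 x i ≤ ENNReal.ofReal (∑ b : Fin k, (x i b - ∑ l, if l = i then 0 else a l * x l b) ^ 2)) a ?_ ?_
  · apply isClosed_le continuous_const
    apply ENNReal.continuous_ofReal.comp
    apply continuous_finsetSum
    intro b _
    apply Continuous.pow
    apply Continuous.sub continuous_const
    apply continuous_finsetSum
    intro l _
    split_ifs
    · exact continuous_const
    · fun_prop
  · intro q
    exact iInf_le _ q

lemma inner_toLp {κ : Type*} [Fintype κ] (x y : κ → ℝ) :
    inner ℝ (WithLp.toLp 2 x : EuclideanSpace ℝ κ) (WithLp.toLp 2 y) = x ⬝ᵥ y := by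
  simp [PiLp.inner_apply, dotProduct, mul_comm]

lemma inner_eq_dot {κ : Type*} [Fintype κ] (x y : EuclideanSpace ℝ κ) :
    inner ℝ x y = x.ofLp ⬝ᵥ y.ofLp := by
  simp [PiLp.inner_apply, dotProduct, mul_comm]

/-- Orthonormal basis with `k - card + 1` members orthogonal to all `x l`, `l ≠ i`. -/
lemma exists_perp {ι : Type*} [Fintype ι] {k : ℕ} (x : ι → Fin k → ℝ) (i : ι)
    (hk : Fintype.card ι ≤ k) :
    ∃ v : Fin k → Fin k → ℝ, (∀ a b, v a ⬝ᵥ v b = if a = b then 1 else 0) ∧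
      ∃ J : Finset (Fin k), J.card = k + 1 - Fintype.card ι ∧
        ∀ a ∈ J, ∀ l, l ≠ i → v a ⬝ᵥ x l = 0 := by
  let g : {l : ι // l ≠ i} → EuclideanSpace ℝ (Fin k) := fun l => WithLp.toLp 2 (x l)
  let S := Submodule.span ℝ (Set.range g)
  set m := k + 1 - Fintype.card ι with hm
  have hcardpos : 0 < Fintype.card ι := Fintype.card_pos_iff.2 ⟨i⟩
  have hS : Module.finrank ℝ S ≤ Fintype.card ι - 1 := by
    refine (finrank_range_le_card g).trans ?_
    simp [Fintype.card_subtype_compl]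
  have hS2 : m ≤ Module.finrank ℝ Sᗮ := by
    have := Submodule.finrank_add_finrank_orthogonal S
    simp only [finrank_euclideanSpace, Fintype.card_fin] at this
    omega
  let e := stdOrthonormalBasis ℝ Sᗮ
  let v0 : Fin k → EuclideanSpace ℝ (Fin k) := fun a =>
    if h : (a : ℕ) < m then (e ⟨a, h.trans_le hS2⟩ : EuclideanSpace ℝ (Fin k)) else 0
  let s : Set (Fin k) := {a | (a : ℕ) < m}
  have hv0 : ∀ a : Fin k, ∀ h : (a : ℕ) < m, v0 a = (e ⟨a, h.trans_le hS2⟩ : EuclideanSpace ℝ (Fin k)) :=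
    fun a h => dif_pos h
  have hon : Orthonormal ℝ (s.domRestrict v0) := by
    rw [orthonormal_iff_ite]
    rintro ⟨a, ha⟩ ⟨b, hb⟩
    simp only [Set.domRestrict_apply]
    rw [hv0 a ha, hv0 b hb, ← Submodule.coe_inner, orthonormal_iff_ite.1 e.orthonormal]
    simp [Fin.ext_iff]
  obtain ⟨b, hb⟩ := hon.exists_orthonormalBasis_extension_of_card_eq (by simp)
  refine ⟨fun a => (b a).ofLp, ?_, Finset.univ.filter (fun a : Fin k => (a : ℕ) < m), ?_, ?_⟩
  · intro a c
    rw [← inner_eq_dot, orthonormal_iff_ite.1 b.orthonormal]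
  · have hmk : m ≤ k := by omega
    have : (Finset.univ.filter (fun a : Fin k => (a : ℕ) < m)) =
        Finset.univ.map (Fin.castLEEmb hmk) := by
      ext a
      simp only [Finset.mem_filter, Finset.mem_univ, true_and, Finset.mem_map]
      constructor
      · intro h; exact ⟨⟨a, h⟩, rfl⟩
      · rintro ⟨c, rfl⟩; exact c.2
    rw [this, Finset.card_map, Finset.card_univ, Fintype.card_fin]
  · intro a ha l hl
    have ha' : (a : ℕ) < m := (Finset.mem_filter.1 ha).2
    have h1 : b a ∈ Sᗮ := by
      rw [hb a ha', hv0 a ha']; exact (e _).2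
    have h2 : g ⟨l, hl⟩ ∈ S := Submodule.subset_span ⟨_, rfl⟩
    have h3 := Submodule.inner_left_of_mem_orthogonal h2 h1
    rw [inner_eq_dot] at h3
    exact h3

lemma dist2_inv {ι : Type*} [Fintype ι] {k : ℕ} (i : ι) (hk : Fintype.card ι + 1 < k) :
    ∫⁻ x, (dist2 x i)⁻¹ ∂(Measure.pi fun _ : ι => gam (Fin k)) ≤
      ENNReal.ofReal (1 / ((k : ℝ) - Fintype.card ι - 1)) := by
  have hmeas : Measurable (fun x : ι → Fin k → ℝ => (dist2 x i)⁻¹) := (dist2_measurable i).inv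
  rw [lintegral_eq_lmarginal_univ (fun _ _ => 0), lmarginal_erase' _ hmeas (Finset.mem_univ i)]
  have hb : ∀ x : ι → Fin k → ℝ, ∫⁻ y, (dist2 (Function.update x i y) i)⁻¹ ∂(gam (Fin k)) ≤
      ENNReal.ofReal (1 / ((k : ℝ) - Fintype.card ι - 1)) := by
    intro x
    obtain ⟨v, hv, J, hJ, hperp⟩ := exists_perp x i (by omega)
    have hc := chi_inv v (fun a b => by rw [hv a b]; congr) J (by omega)
    have hcast : (J.card : ℝ) - 2 = (k : ℝ) - Fintype.card ι - 1 := by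
      rw [hJ, Nat.cast_sub (by omega)]; push_cast; ring
    rw [hcast] at hc
    refine le_trans (lintegral_mono fun y => ?_) hc
    apply ENNReal.inv_le_inv.2
    apply le_iInf
    intro q
    apply ENNReal.ofReal_le_ofReal
    set z : Fin k → ℝ := fun b => Function.update x i y i b - ∑ l, if l = i then 0 else (q l : ℝ) * Function.update x i y l b with hz
    have hz2 : z = y - ∑ l, (if l = i then 0 else (q l : ℝ)) • x l := by
      funext b
      simp only [hz, Function.update_self, Pi.sub_apply, Finset.sum_apply, Pi.smul_apply, smul_eq_mul]
      congr 1
      apply Finset.sum_congr rfl; intro l _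
      by_cases hl : l = i
      · simp [hl]
      · simp [hl]
    have hvz : ∀ a ∈ J, v a ⬝ᵥ z = v a ⬝ᵥ y := by
      intro a ha
      rw [hz2, dotProduct_sub, dotProduct_sum]
      have : ∑ l, v a ⬝ᵥ ((if l = i then 0 else (q l : ℝ)) • x l) = 0 := by
        apply Finset.sum_eq_zero; intro l _
        by_cases hl : l = i
        · simp [hl]
        · rw [dotProduct_smul, hperp a ha l hl, smul_zero]
      rw [this, sub_zero]
    have horth : (Matrix.of v)ᵀ * (Matrix.of v) = 1 := by
      have : (Matrix.of v) * (Matrix.of v)ᵀ = 1 := by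
        ext a b; rw [Matrix.mul_apply, Matrix.one_apply, ← hv a b]; rfl
      exact mul_eq_one_comm.1 this
    have hzz : z ⬝ᵥ z = ∑ a, (v a ⬝ᵥ z) ^ 2 := by
      have := dot_self_orth (Matrix.of v)ᵀ (by simpa using horth) z
      rw [this]; rfl
    have hzs : ∑ b, z b ^ 2 = z ⬝ᵥ z := by simp [dotProduct, sq]
    calc ∑ a ∈ J, (v a ⬝ᵥ y) ^ 2 = ∑ a ∈ J, (v a ⬝ᵥ z) ^ 2 :=
          Finset.sum_congr rfl fun a ha => by rw [hvz a ha]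
      _ ≤ ∑ a, (v a ⬝ᵥ z) ^ 2 :=
          Finset.sum_le_sum_of_subset_of_nonneg (Finset.subset_univ _) fun _ _ _ => sq_nonneg _
      _ = ∑ b, z b ^ 2 := by rw [hzs, hzz]
  refine (lmarginal_mono (g := fun _ => ENNReal.ofReal (1 / ((k : ℝ) - Fintype.card ι - 1))) hb _).trans ?_
  unfold lmarginal
  simp

lemma exists_dual {ι : Type*} [Fintype ι] {k : ℕ} (x : ι → Fin k → ℝ) (hx : ∀ i, dist2 x i ≠ 0) :
    ∃ c : ι → Fin k → ℝ, (∀ i j, c i ⬝ᵥ x j = if i = j then 1 else 0) ∧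
      ∀ i, ENNReal.ofReal (c i ⬝ᵥ c i) ≤ (dist2 x i)⁻¹ := by
  have key : ∀ i, ∃ c : Fin k → ℝ, (∀ j, c ⬝ᵥ x j = if i = j then 1 else 0) ∧
      ENNReal.ofReal (c ⬝ᵥ c) ≤ (dist2 x i)⁻¹ := by
    intro i
    let g : {l : ι // l ≠ i} → EuclideanSpace ℝ (Fin k) := fun l => WithLp.toLp 2 (x l)
    let S := Submodule.span ℝ (Set.range g)
    let u : EuclideanSpace ℝ (Fin k) := WithLp.toLp 2 (x i)
    let P : EuclideanSpace ℝ (Fin k) := S.starProjection u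
    have hP : P ∈ S := Submodule.starProjection_apply_mem S u
    have hQ : u - P ∈ Sᗮ := Submodule.sub_starProjection_mem_orthogonal u
    obtain ⟨a0, ha0⟩ := (Submodule.mem_span_range_iff_exists_fun ℝ).1 hP
    let a : ι → ℝ := fun l => if h : l ≠ i then a0 ⟨l, h⟩ else 0
    set p : Fin k → ℝ := (u - P).ofLp with hp
    have hPb : ∀ b, P b = ∑ l, if l = i then 0 else a l * x l b := by
      intro b
      rw [← ha0]
      have e1 : (∑ l, a0 l • g l : EuclideanSpace ℝ (Fin k)) b = ∑ l : {l : ι // l ≠ i}, a l * x l b := by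
        simp only [WithLp.ofLp_sum, Finset.sum_apply]
        apply Finset.sum_congr rfl; intro l _
        simp [a, g, l.2]
      rw [e1]
      have e2 : ∑ l ∈ Finset.univ.filter (fun l : ι => l ≠ i), a l * x l b = ∑ l : {l : ι // l ≠ i}, a l * x l b :=
        Finset.sum_subtype _ (by simp) (fun l => a l * x l b)
      rw [← e2, Finset.sum_filter]
      apply Finset.sum_congr rfl; intro l _
      by_cases hl : l = i <;> simp [hl]
    have hd : dist2 x i ≤ ENNReal.ofReal (p ⬝ᵥ p) := by
      refine (dist2_le x i a).trans (le_of_eq ?_)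
      congr 1
      simp only [dotProduct, ← sq]
      apply Finset.sum_congr rfl; intro b _
      rw [← hPb b]; rfl
    have hpp : 0 < p ⬝ᵥ p := by
      by_contra hcon
      rw [ENNReal.ofReal_of_nonpos (not_lt.1 hcon)] at hd
      exact hx i (le_antisymm hd zero_le)
    have hpj : ∀ j, j ≠ i → p ⬝ᵥ x j = 0 := by
      intro j hj
      have h2 : g ⟨j, hj⟩ ∈ S := Submodule.subset_span ⟨_, rfl⟩
      have h3 := Submodule.inner_left_of_mem_orthogonal h2 hQ
      rw [inner_eq_dot] at h3
      exact h3
    have hpi : p ⬝ᵥ x i = p ⬝ᵥ p := by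
      have h3 := Submodule.inner_left_of_mem_orthogonal hP hQ
      have h4 : inner ℝ (u - P) u = inner ℝ (u - P) (u - P) := by
        rw [inner_sub_right (u - P) u P, h3, sub_zero]
      rw [inner_eq_dot, inner_eq_dot] at h4
      exact h4
    refine ⟨(p ⬝ᵥ p)⁻¹ • p, ?_, ?_⟩
    · intro j
      rw [smul_dotProduct]
      by_cases hj : i = j
      · subst hj; rw [hpi, if_pos rfl, smul_eq_mul, inv_mul_cancel₀ hpp.ne']
      · rw [hpj j (Ne.symm hj), if_neg hj, smul_zero]
    · rw [smul_dotProduct, dotProduct_smul, smul_eq_mul, smul_eq_mul, inv_mul_cancel₀ hpp.ne', mul_one,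
        ENNReal.ofReal_inv_of_pos hpp]
      exact ENNReal.inv_le_inv.2 hd
  choose c hc using key
  exact ⟨c, fun i => (hc i).1, fun i => (hc i).2⟩

lemma sval_neg_le {n : ℕ} (M : Matrix (Fin n) (Fin n) ℝ) (i : ℕ) : sval (-M) i = sval M i := by
  have e : (-M)ᴴ * (-M) = Mᴴ * M := by rw [conjTranspose_neg, neg_mul_neg]
  unfold sval
  have : ∀ (B : Matrix (Fin n) (Fin n) ℝ) (h : B.IsHermitian) (_ : B = Mᴴ * M),
      h.eigenvalues = (Matrix.posSemidef_conjTranspose_mul_self M).1.eigenvalues := by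
    intro B h e; subst e; rfl
  rw [this _ (Matrix.posSemidef_conjTranspose_mul_self (-M)).1 e]

lemma split_rows {n k : ℕ} (p : Fin n → Prop) [DecidablePred p] (f : (Fin n → Fin k → ℝ) → ℝ≥0∞) :
    ∫⁻ ω, f ω ∂gaussianEnsemble n k ≤
      ∫⁻ x : ({j : Fin n // p j} → Fin k → ℝ), ∫⁻ y : ({j : Fin n // ¬ p j} → Fin k → ℝ),
        f (fun j => if h : p j then x ⟨j, h⟩ else y ⟨j, h⟩)
        ∂(Measure.pi fun _ => gam (Fin k)) ∂(Measure.pi fun _ => gam (Fin k)) := by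
  have hm := (measurePreserving_piEquivPiSubtypeProd (fun _ : Fin n => gam (Fin k)) p).symm
  have h1 : gaussianEnsemble n k = Measure.pi (fun _ : Fin n => gam (Fin k)) := rfl
  rw [h1, ← hm.map_eq]
  refine (lintegral_map_le _ _).trans ?_
  refine (lintegral_prod_le _).trans ?_
  exact le_of_eq rfl

lemma inner_int {n k : ℕ} (ϱ : ℕ) (x : {j : Fin n // (j : ℕ) < ϱ} → Fin k → ℝ)
    (c : Fin n → Fin k → ℝ) (s : Fin n → ℝ) (hs : ∀ j, 0 ≤ s j) :
    ∫⁻ y : ({j : Fin n // ¬ (j : ℕ) < ϱ} → Fin k → ℝ),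
      ENNReal.ofReal (∑ j : Fin n, (if (j : ℕ) < ϱ then 0 else s j) *
        (1 + ∑ i : Fin n, if (i : ℕ) < ϱ then
          (c i ⬝ᵥ (if h : (j : ℕ) < ϱ then x ⟨j, h⟩ else y ⟨j, h⟩)) ^ 2 else 0))
      ∂(Measure.pi fun _ => gam (Fin k)) ≤
    ENNReal.ofReal (∑ j : Fin n, (if (j : ℕ) < ϱ then 0 else s j)) *
      (1 + ∑ i : {j : Fin n // (j : ℕ) < ϱ}, ENNReal.ofReal (c i ⬝ᵥ c i)) := by
  have hs' : ∀ j : Fin n, 0 ≤ (if (j : ℕ) < ϱ then 0 else s j) := by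
    intro j; split_ifs; exacts [le_rfl, hs j]
  have hin : ∀ (j : Fin n) (y : {j : Fin n // ¬ (j : ℕ) < ϱ} → Fin k → ℝ),
      0 ≤ ∑ i : Fin n, if (i : ℕ) < ϱ then
          (c i ⬝ᵥ (if h : (j : ℕ) < ϱ then x ⟨j, h⟩ else y ⟨j, h⟩)) ^ 2 else 0 := by
    intro j y
    apply Finset.sum_nonneg; intro i _; split_ifs <;> positivity
  have hmeas : ∀ (i j : Fin n), Measurable (fun y : {j : Fin n // ¬ (j : ℕ) < ϱ} → Fin k → ℝ =>
      ENNReal.ofReal (if (i : ℕ) < ϱ then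
          (c i ⬝ᵥ (if h : (j : ℕ) < ϱ then x ⟨j, h⟩ else y ⟨j, h⟩)) ^ 2 else 0)) := by
    intro i j
    apply Measurable.ennreal_ofReal
    apply Continuous.measurable
    by_cases hi : (i : ℕ) < ϱ
    · by_cases hj : (j : ℕ) < ϱ
      · simp only [hi, hj, dif_pos, if_true]; exact continuous_const
      · simp only [hi, hj, dif_neg, if_true, not_false_eq_true, dotProduct]
        fun_prop
    · simp only [hi, if_false]; exact continuous_const
  have e1 : ∀ y : {j : Fin n // ¬ (j : ℕ) < ϱ} → Fin k → ℝ,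
      ENNReal.ofReal (∑ j : Fin n, (if (j : ℕ) < ϱ then 0 else s j) *
        (1 + ∑ i : Fin n, if (i : ℕ) < ϱ then
          (c i ⬝ᵥ (if h : (j : ℕ) < ϱ then x ⟨j, h⟩ else y ⟨j, h⟩)) ^ 2 else 0)) =
      ∑ j : Fin n, ENNReal.ofReal (if (j : ℕ) < ϱ then 0 else s j) *
        (1 + ∑ i : Fin n, ENNReal.ofReal (if (i : ℕ) < ϱ then
          (c i ⬝ᵥ (if h : (j : ℕ) < ϱ then x ⟨j, h⟩ else y ⟨j, h⟩)) ^ 2 else 0)) := by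
    intro y
    rw [ENNReal.ofReal_sum_of_nonneg (fun j _ => mul_nonneg (hs' j) (add_nonneg zero_le_one (hin j y)))]
    apply Finset.sum_congr rfl; intro j _
    rw [ENNReal.ofReal_mul (hs' j), ENNReal.ofReal_add zero_le_one (hin j y), ENNReal.ofReal_one,
      ENNReal.ofReal_sum_of_nonneg]
    intro i _; split_ifs <;> positivity
  simp_rw [e1]
  have hmeas2 : ∀ j : Fin n, Measurable (fun y : {j : Fin n // ¬ (j : ℕ) < ϱ} → Fin k → ℝ =>
      ENNReal.ofReal (if (j : ℕ) < ϱ then 0 else s j) *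
        (1 + ∑ i : Fin n, ENNReal.ofReal (if (i : ℕ) < ϱ then
          (c i ⬝ᵥ (if h : (j : ℕ) < ϱ then x ⟨j, h⟩ else y ⟨j, h⟩)) ^ 2 else 0))) := fun j =>
    (measurable_const.add (Finset.measurable_sum _ fun i _ => hmeas i j)).const_mul _
  rw [lintegral_finsetSum _ (fun j _ => hmeas2 j)]
  rw [ENNReal.ofReal_sum_of_nonneg (fun j _ => hs' j), Finset.sum_mul]
  apply Finset.sum_le_sum; intro j _
  by_cases hj : (j : ℕ) < ϱ
  · simp [hj]
  rw [lintegral_const_mul' _ _ ENNReal.ofReal_ne_top, lintegral_add_left measurable_const,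
    lintegral_finsetSum _ (fun i _ => hmeas i j)]
  gcongr
  · simp
  · have e2 : ∑ i : {j : Fin n // (j : ℕ) < ϱ}, ENNReal.ofReal (c i ⬝ᵥ c i) =
        ∑ i ∈ Finset.univ.filter (fun i : Fin n => (i : ℕ) < ϱ), ENNReal.ofReal (c i ⬝ᵥ c i) :=
      (Finset.sum_subtype _ (by simp) (fun i => ENNReal.ofReal (c i ⬝ᵥ c i))).symm
    rw [e2, Finset.sum_filter]
    apply Finset.sum_le_sum; intro i _
    by_cases hi : (i : ℕ) < ϱ
    · simp only [hi, hj, if_true, dif_neg, not_false_eq_true]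
      have hev := measurePreserving_eval (fun _ : {j : Fin n // ¬ (j : ℕ) < ϱ} => gam (Fin k)) ⟨j, hj⟩
      have hmm : Measurable (fun w : Fin k → ℝ => ENNReal.ofReal ((c i ⬝ᵥ w) ^ 2)) := by
        apply Measurable.ennreal_ofReal
        apply Continuous.measurable
        simp only [dotProduct]
        fun_prop
      have := hev.lintegral_comp hmm
      rw [second_moment] at this
      exact le_of_eq this
    · simp [hi]

lemma exp_bound {n k : ℕ} (A : Matrix (Fin n) (Fin n) ℝ) (hA : A.PosSemidef) (ϱ : ℕ)
    (hk : ϱ + 1 < k) (hkn : k ≤ n) :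
    ∫⁻ ω, ENNReal.ofReal (sval (A - nystrom A (Matrix.of ω)) 0) ∂gaussianEnsemble n k ≤
      ENNReal.ofReal (∑ j : Fin n, (if (j : ℕ) < ϱ then 0 else sval A j)) *
        (1 + ϱ * ENNReal.ofReal (1 / ((k : ℝ) - ϱ - 1))) := by
  obtain ⟨V, hV1, hV2, hAV⟩ := psd_diag A hA
  have hrot := ensemble_rot (k := k) V hV2
  have hcard : Fintype.card {j : Fin n // (j : ℕ) < ϱ} = ϱ := by
    rw [Fintype.card_subtype]
    have : (Finset.univ.filter (fun a : Fin n => (a : ℕ) < ϱ)) =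
        Finset.univ.map (Fin.castLEEmb (show ϱ ≤ n by omega)) := by
      ext a
      simp only [Finset.mem_filter, Finset.mem_univ, true_and, Finset.mem_map]
      constructor
      · intro h; exact ⟨⟨a, h⟩, rfl⟩
      · rintro ⟨c, rfl⟩; exact c.2
    rw [this, Finset.card_map, Finset.card_univ, Fintype.card_fin]
  have hdi : ∀ i : {j : Fin n // (j : ℕ) < ϱ},
      ∫⁻ x, (dist2 x i)⁻¹ ∂(Measure.pi fun _ : {j : Fin n // (j : ℕ) < ϱ} => gam (Fin k)) ≤
      ENNReal.ofReal (1 / ((k : ℝ) - ϱ - 1)) := by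
    intro i
    have := dist2_inv (k := k) i (by rw [hcard]; exact hk)
    rwa [hcard] at this
  have hae : ∀ᵐ x ∂(Measure.pi fun _ : {j : Fin n // (j : ℕ) < ϱ} => gam (Fin k)),
      ∀ i, dist2 x i ≠ 0 := by
    rw [ae_all_iff]
    intro i
    have := ae_lt_top (dist2_measurable i).inv ((hdi i).trans_lt ENNReal.ofReal_lt_top).ne
    filter_upwards [this] with x hx h0
    rw [Pi.inv_apply, h0] at hx
    simp at hx
  have hdm : ∀ i : {j : Fin n // (j : ℕ) < ϱ}, Measurable
      (fun x : {j : Fin n // (j : ℕ) < ϱ} → Fin k → ℝ => (dist2 x i)⁻¹) :=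
    fun i => (dist2_measurable i).inv
  calc ∫⁻ ω, ENNReal.ofReal (sval (A - nystrom A (Matrix.of ω)) 0) ∂gaussianEnsemble n k
      ≤ ∫⁻ W, ENNReal.ofReal (sval (A - nystrom A (V * Matrix.of W)) 0) ∂gaussianEnsemble n k := by
        conv_lhs => rw [← hrot.map_eq]
        exact (lintegral_map_le _ _).trans (le_of_eq rfl)
    _ ≤ _ := split_rows (fun j : Fin n => (j : ℕ) < ϱ) _
    _ ≤ ∫⁻ x, ENNReal.ofReal (∑ j : Fin n, (if (j : ℕ) < ϱ then 0 else sval A j)) *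
          (1 + ∑ i : {j : Fin n // (j : ℕ) < ϱ}, (dist2 x i)⁻¹) ∂(Measure.pi fun _ => gam (Fin k)) := by
        apply lintegral_mono_ae
        filter_upwards [hae] with x hx
        obtain ⟨c, hc1, hc2⟩ := exists_dual x hx
        let c' : Fin n → Fin k → ℝ := fun j => if h : (j : ℕ) < ϱ then c ⟨j, h⟩ else 0
        have hc' : ∀ i : {j : Fin n // (j : ℕ) < ϱ}, c' i = c i := fun i => dif_pos i.2
        have h1 := inner_int ϱ x c' (fun j => sval A j) (fun j => sval_nonneg A j)
        refine le_trans (lintegral_mono fun y => ?_) (h1.trans ?_)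
        · apply ENNReal.ofReal_le_ofReal
          refine det_bound A hA V hV1 hV2 hAV ϱ (Matrix.of fun j => if h : (j : ℕ) < ϱ then x ⟨j, h⟩ else y ⟨j, h⟩) c' ?_
          intro i j hi hj
          have e1 : c' i = c ⟨i, hi⟩ := dif_pos hi
          have e2 : (Matrix.of fun j : Fin n => if h : (j : ℕ) < ϱ then x ⟨j, h⟩ else y ⟨j, h⟩) j = x ⟨j, hj⟩ := dif_pos hj
          rw [e1, e2, hc1]
          simp
        · gcongr with i
          rw [hc' i]
          exact hc2 i
    _ = ENNReal.ofReal (∑ j : Fin n, (if (j : ℕ) < ϱ then 0 else sval A j)) *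
          (1 + ∑ i : {j : Fin n // (j : ℕ) < ϱ},
            ∫⁻ x, (dist2 x i)⁻¹ ∂(Measure.pi fun _ : {j : Fin n // (j : ℕ) < ϱ} => gam (Fin k))) := by
        rw [lintegral_const_mul' _ _ ENNReal.ofReal_ne_top, lintegral_add_left measurable_const,
          lintegral_finsetSum _ (fun i _ => hdm i)]
        simp
    _ ≤ _ := by
        gcongr
        refine (Finset.sum_le_sum fun i _ => hdi i).trans ?_
        rw [Finset.sum_const, Finset.card_univ, hcard, nsmul_eq_mul]

lemma point_bound {n : ℕ} (A B : Matrix (Fin n) (Fin n) ℝ) (r : ℕ) :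
    schatten ⊤ (A - truncate B r) ≤ schatten ⊤ (A - truncate A r) + 2 * sval (A - B) 0 := by
  have h1 := (truncate_spec B r).2 ⊤ le_top (truncate A r) (truncate_spec A r).1
  rw [schatten_top, schatten_top] at *
  have h2 := sval_zero_add_le (A - B) (B - truncate B r)
  have h3 := sval_zero_add_le (B - A) (A - truncate A r)
  have h4 : sval (B - A) 0 = sval (A - B) 0 := by rw [← sval_neg_le, neg_sub]
  rw [sub_add_sub_cancel] at h2 h3
  linarith

theorem stmt4 {n k r : ℕ} (A : Matrix (Fin n) (Fin n) ℝ) (hA : A.PosSemidef)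
    (hr : 1 ≤ r) (hrk : r < k) (hkn : k ≤ n) :
    ∀ ϱ : ℕ, ϱ + 1 < k →
      (∫ ω, schatten ⊤ (A - truncate (nystrom A (Matrix.of ω)) r) ∂ gaussianEnsemble n k)
        ≤ schatten ⊤ (A - truncate A r)
          + 2 * ((1 + (ϱ : ℝ) / ((k : ℝ) - ϱ - 1)) * schatten 1 (A - truncate A ϱ)) := by
  intro ϱ hϱ
  have hT := schatten_one_ge A (truncate A ϱ) ϱ (truncate_spec A ϱ).1
  have hT0 : 0 ≤ ∑ j : Fin n, (if (j : ℕ) < ϱ then 0 else sval A j) := by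
    apply Finset.sum_nonneg; intro j _; split_ifs; exacts [le_rfl, sval_nonneg A j]
  set T := ∑ j : Fin n, (if (j : ℕ) < ϱ then 0 else sval A j) with hTdef
  have hC0 : 0 ≤ schatten ⊤ (A - truncate A r) := by rw [schatten_top]; exact sval_nonneg _ _
  set C := schatten ⊤ (A - truncate A r) with hC
  have hd : 0 < (k : ℝ) - ϱ - 1 := by
    have : ((ϱ + 1 : ℕ) : ℝ) < k := by exact_mod_cast hϱ
    push_cast at this; linarith
  have hq : 0 ≤ (1 + (ϱ : ℝ) / ((k : ℝ) - ϱ - 1)) := by positivity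
  have hprob : IsProbabilityMeasure (gaussianEnsemble n k) := by
    unfold gaussianEnsemble; infer_instance
  have hlow : C + 2 * ((1 + (ϱ : ℝ) / ((k : ℝ) - ϱ - 1)) * T) ≤
      C + 2 * ((1 + (ϱ : ℝ) / ((k : ℝ) - ϱ - 1)) * schatten 1 (A - truncate A ϱ)) := by
    gcongr
  refine le_trans ?_ hlow
  by_cases hm : AEStronglyMeasurable (fun ω => schatten ⊤ (A - truncate (nystrom A (Matrix.of ω)) r))
      (gaussianEnsemble n k)
  · rw [integral_eq_lintegral_of_nonneg_ae (Filter.Eventually.of_forall fun ω => by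
      rw [schatten_top]; exact sval_nonneg _ _) hm]
    apply ENNReal.toReal_le_of_le_ofReal (by positivity)
    calc ∫⁻ ω, ENNReal.ofReal (schatten ⊤ (A - truncate (nystrom A (Matrix.of ω)) r)) ∂gaussianEnsemble n k
        ≤ ∫⁻ ω, (ENNReal.ofReal C + 2 * ENNReal.ofReal (sval (A - nystrom A (Matrix.of ω)) 0)) ∂gaussianEnsemble n k := by
          apply lintegral_mono; intro ω
          refine (ENNReal.ofReal_le_ofReal (point_bound A (nystrom A (Matrix.of ω)) r)).trans ?_
          refine ENNReal.ofReal_add_le.trans ?_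
          rw [ENNReal.ofReal_mul zero_le_two, ENNReal.ofReal_ofNat]
      _ = ENNReal.ofReal C + 2 * ∫⁻ ω, ENNReal.ofReal (sval (A - nystrom A (Matrix.of ω)) 0) ∂gaussianEnsemble n k := by
          rw [lintegral_add_left measurable_const, lintegral_const_mul' _ _ (by simp)]
          simp
      _ ≤ ENNReal.ofReal C + 2 * (ENNReal.ofReal T * (1 + ϱ * ENNReal.ofReal (1 / ((k : ℝ) - ϱ - 1)))) := by
          gcongr
          exact exp_bound A hA ϱ hϱ hkn
      _ = _ := by
          rw [ENNReal.ofReal_add hC0 (by positivity), ENNReal.ofReal_mul zero_le_two,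
            ENNReal.ofReal_mul hq, ENNReal.ofReal_add zero_le_one (by positivity), ENNReal.ofReal_one,
            ENNReal.ofReal_ofNat, div_eq_mul_one_div (ϱ : ℝ), ENNReal.ofReal_mul (by positivity),
            ENNReal.ofReal_natCast, mul_comm (ENNReal.ofReal T)]
  · rw [integral_non_aestronglyMeasurable hm]
    positivity

end PsdSketch
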